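/- Let C be a quasiminimal pregeometry class, H ∈ C, and φ(v) an L_{ω₁,ω}-formula in one free variable, possibly using (countably many) parameters from H. Then the set φ(H) = {a ∈ H : H ⊨ φ(a)} is either countable or cocountable (its complement in H is countable). -/

import Mathlib

open FirstOrder FirstOrder.Language Set Cardinal



universe u u' v w

namespace QM

variable {L : FirstOrder.Language.{v, w}}

/-- Formulas of `L_{ω₁,ω}`: built from atomic formulas by negation, countable
conjunction (indexed by `ℕ`), and universal quantification; `α` is the type of free
variables and `n` counts the de Bruijn bound variables. Countable disjunctions and
the existential quantifier are definable via negation. -/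
inductive InfFormula (L : FirstOrder.Language.{v, w}) (α : Type u) : ℕ → Type (max u v w)
  | falsum {n : ℕ} : InfFormula L α n
  | equal {n : ℕ} (t₁ t₂ : L.Term (α ⊕ (Fin n))) : InfFormula L α n
  | rel {n l : ℕ} (R : L.Relations l) (ts : Fin l → L.Term (α ⊕ (Fin n))) : InfFormula L α n
  | not {n : ℕ} (φ : InfFormula L α n) : InfFormula L α n
  | iInf {n : ℕ} (φ : ℕ → InfFormula L α n) : InfFormula L α n
  | all {n : ℕ} (φ : InfFormula L α (n + 1)) : InfFormula L α n

/-- Satisfaction of an `L_{ω₁,ω}`-formula in an `L`-structure `M`, given an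
assignment `v` of the free variables and `xs` of the bound variables. -/
def InfFormula.Realize {M : Type u'} [L.Structure M] {α : Type u} :
    ∀ {n : ℕ}, InfFormula L α n → (α → M) → (Fin n → M) → Prop
  | _, .falsum, _, _ => False
  | _, .equal t₁ t₂, v, xs => t₁.realize (Sum.elim v xs) = t₂.realize (Sum.elim v xs)
  | _, .rel R ts, v, xs => Structure.RelMap R (fun i => (ts i).realize (Sum.elim v xs))
  | _, .not φ, v, xs => ¬ φ.Realize v xs
  | _, .iInf φ, v, xs => ∀ i : ℕ, (φ i).Realize v xs
  | _, .all φ, v, xs => ∀ x : M, φ.Realize v (Fin.snoc xs x)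

/-- An `L_{ω₁,ω}`-sentence. -/
abbrev InfSentence (L : FirstOrder.Language.{v, w}) := InfFormula L PEmpty 0

/-- Satisfaction of an `L_{ω₁,ω}`-sentence. -/
def InfSentence.RealizeS (M : Type u') [L.Structure M] (φ : InfSentence L) : Prop :=
  InfFormula.Realize (M := M) φ PEmpty.elim (fun i => i.elim0)

/-- Satisfaction of an `L_{ω₁,ω}`-formula with parameters from the set `A`
and `m` free variables `v̄`, at the tuple `v`. -/
def InfFormula.RealizeP {M : Type u'} [L.Structure M] {A : Set M} {m : ℕ}
    (φ : InfFormula L (↥A ⊕ Fin m) 0) (v : Fin m → M) : Prop :=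
  φ.Realize (Sum.elim Subtype.val v) (fun i => i.elim0)

/-- The domain of a partial map, viewed as a graph (set of pairs). -/
def pdom {H : Type*} {H' : Type*} (p : Set (H × H')) : Set H := Prod.fst '' p

/-- The image of a partial map, viewed as a graph (set of pairs). -/
def pimg {H : Type*} {H' : Type*} (p : Set (H × H')) : Set H' := Prod.snd '' p

/-- The image of a set `X` under a partial map given as a graph. -/
def pimage {H : Type*} {H' : Type*} (p : Set (H × H')) (X : Set H) : Set H' :=
  {b | ∃ a ∈ X, (a, b) ∈ p}

/-- A partial map (given as its graph `p`) is a partial embedding if it preserves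
quantifier-free first-order formulas. (This forces `p` to be the graph of an
injective partial function.) -/
def IsPartialEmbedding {H : Type u} {H' : Type u} [L.Structure H] [L.Structure H']
    (p : Set (H × H')) : Prop :=
  ∀ (n : ℕ) (φ : L.Formula (Fin n)), BoundedFormula.IsQF φ →
    ∀ (a : Fin n → H) (b : Fin n → H'), (∀ i, (a i, b i) ∈ p) →
      (φ.Realize a ↔ φ.Realize b)

/-- A partial map is a σ-embedding if it is a partial embedding and preserves all
`L_{ω₁,ω}`-formulas with (possibly infinitely many) parameters from its domain;
equivalently `⟨M, m⟩_{m ∈ dom p} ≡_{ω₁,ω} ⟨N, p(m)⟩_{m ∈ dom p}`. -/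
def IsSigmaEmbedding {H : Type u} {H' : Type u} [L.Structure H] [L.Structure H']
    (p : Set (H × H')) : Prop :=
  IsPartialEmbedding (L := L) p ∧
    ∀ (φ : InfFormula L (↥(pdom p)) 0) (b : ↥(pdom p) → H'),
      (∀ x : ↥(pdom p), ((x : H), b x) ∈ p) →
        (φ.Realize Subtype.val (fun i => i.elim0) ↔ φ.Realize b (fun i => i.elim0))

/-- A pregeometry (combinatorial geometry) on a set. -/
structure IsPregeometry {α : Type*} (cl : Set α → Set α) : Prop where
  subset_cl : ∀ X, X ⊆ cl X
  mono : ∀ ⦃X Y : Set α⦄, X ⊆ Y → cl X ⊆ cl Y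
  idem : ∀ X, cl (cl X) = cl X
  finChar : ∀ (X : Set α) (y : α), y ∈ cl X → ∃ F : Finset α, ↑F ⊆ X ∧ y ∈ cl ↑F
  exchange : ∀ (X : Set α) (a b : α), a ∈ cl (X ∪ {b}) → a ∉ cl X → b ∈ cl (X ∪ {a})

/-- A pair `⟨H, cl_H⟩` of an `L`-structure and a closure operator on it. -/
structure QMObj (L : FirstOrder.Language.{v, w}) where
  carrier : Type u
  [str : L.Structure carrier]
  cl : Set carrier → Set carrier

attribute [instance] QMObj.str

/-- `G` is countable and closed, or empty. -/
def CCOE (H : QMObj.{u} L) (G : Set H.carrier) : Prop :=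
  (G.Countable ∧ H.cl G = G) ∨ G = ∅

/-- The axioms for a class of pairs `⟨H, cl_H⟩` to be a quasiminimal pregeometry class. -/
structure IsQMClass (C : Set (QMObj.{u} L)) : Prop where
  /-- Closure under isomorphisms, transporting the closure operator. -/
  iso_closed : ∀ H ∈ C, ∀ (N : Type u) [_iN : L.Structure N] (f : H.carrier ≃[L] N),
      (⟨N, fun X => f '' (H.cl (f ⁻¹' X))⟩ : QMObj L) ∈ C
  /-- Any two members satisfy the same quantifier-free sentences. -/
  qf_theory : ∀ H ∈ C, ∀ H' ∈ C, ∀ (φ : L.Sentence), BoundedFormula.IsQF φ →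
      (H.carrier ⊨ φ ↔ H'.carrier ⊨ φ)
  /-- Each `cl_H` is a pregeometry. -/
  pregeom : ∀ H ∈ C, IsPregeometry H.cl
  /-- The closure of a finite set is countable. -/
  cl_finite_countable : ∀ H ∈ C, ∀ X : Set H.carrier, X.Finite → (H.cl X).Countable
  /-- The closure of any set is (the underlying set of) a substructure which, with the
  restricted closure operator, is again a member of the class. -/
  cl_mem : ∀ H ∈ C, ∀ X : Set H.carrier, ∃ S : L.Substructure H.carrier,
      (S : Set H.carrier) = H.cl X ∧
      (⟨↥S, fun Y => Subtype.val ⁻¹' (H.cl (Subtype.val '' Y))⟩ : QMObj L) ∈ C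
  /-- Partial embeddings preserve and reflect the closure relation. -/
  cl_embedding : ∀ H ∈ C, ∀ H' ∈ C, ∀ (p : Set (H.carrier × H'.carrier)),
      IsPartialEmbedding (L := L) p → ∀ X ⊆ pdom p, ∀ (y : H.carrier) (y' : H'.carrier),
        (y, y') ∈ p → (y ∈ H.cl X ↔ y' ∈ H'.cl (pimage p X))
  /-- ℵ₀-homogeneity over countable closed models, part (i): an isomorphism between
  countable closed (or empty) sets extends by any pair of independent points. -/
  homogeneity₁ : ∀ H ∈ C, ∀ H' ∈ C, ∀ (g : Set (H.carrier × H'.carrier)),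
      CCOE H (pdom g) → CCOE H' (pimg g) → IsPartialEmbedding (L := L) g →
      ∀ (x : H.carrier) (x' : H'.carrier), x ∉ H.cl (pdom g) → x' ∉ H'.cl (pimg g) →
        IsPartialEmbedding (L := L) (g ∪ {(x, x')})
  /-- ℵ₀-homogeneity over countable closed models, part (ii). -/
  homogeneity₂ : ∀ H ∈ C, ∀ H' ∈ C, ∀ (g f : Set (H.carrier × H'.carrier)),
      CCOE H (pdom g) → CCOE H' (pimg g) → IsPartialEmbedding (L := L) g →
      (pdom f).Finite → IsPartialEmbedding (L := L) (g ∪ f) →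
      ∀ y ∈ H.cl (pdom f ∪ pdom g), ∃ y' : H'.carrier,
        IsPartialEmbedding (L := L) (g ∪ f ∪ {(y, y')})


/-- `p` is a σ-type over `A` in `m` variables: every countable subset of `p` is
consistent with the structure, i.e. simultaneously satisfiable. -/
def IsSigmaType {M : Type u'} [L.Structure M] {A : Set M} {m : ℕ}
    (p : Set (InfFormula L (↥A ⊕ Fin m) 0)) : Prop :=
  ∀ Φ ⊆ p, Φ.Countable → ∃ v : Fin m → M, ∀ φ ∈ Φ, φ.RealizeP v

/-- A σ-type `p` is isolated if there is a consistent `L_{ω₁,ω}`-formula `ψ(x̄)`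
(possibly with parameters from `M`) such that `ψ` implies every formula of `p`. -/
def IsIsolated {M : Type u'} [L.Structure M] {A : Set M} {m : ℕ}
    (p : Set (InfFormula L (↥A ⊕ Fin m) 0)) : Prop :=
  ∃ ψ : InfFormula L (M ⊕ Fin m) 0,
    (∃ v : Fin m → M, ψ.Realize (Sum.elim id v) (fun i => i.elim0)) ∧
    ∀ φ ∈ p, ∀ v : Fin m → M, ψ.Realize (Sum.elim id v) (fun i => i.elim0) → φ.RealizeP v

/-- A σ-type `p` is realised if some tuple satisfies every formula of `p`. -/
def IsRealized {M : Type u'} [L.Structure M] {A : Set M} {m : ℕ}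
    (p : Set (InfFormula L (↥A ⊕ Fin m) 0)) : Prop :=
  ∃ v : Fin m → M, ∀ φ ∈ p, φ.RealizeP v

/-- `B` is an independent subset of the pregeometry `⟨H, cl_H⟩`. -/
def IsIndep (H : QMObj.{u} L) (B : Set H.carrier) : Prop :=
  ∀ x ∈ B, x ∉ H.cl (B \ {x})

/-- `B` is a basis of the pregeometry `⟨H, cl_H⟩`: a maximal independent subset. -/
def IsBasis (H : QMObj.{u} L) (B : Set H.carrier) : Prop :=
  IsIndep H B ∧ ∀ B' : Set H.carrier, B ⊆ B' → IsIndep H B' → B' = B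

/-- The model-theoretic algebraic closure of `X` in `M`: the set of elements
satisfying some first-order formula with parameters in `X` having finitely many
solutions. -/
def aclS (L : FirstOrder.Language.{v, w}) (M : Type u) [L.Structure M] (X : Set M) :
    Set M :=
  {y | ∃ (n : ℕ) (φ : L.BoundedFormula (Fin n) 1) (v : Fin n → M),
    (∀ i, v i ∈ X) ∧ φ.Realize v ![y] ∧ {z : M | φ.Realize v ![z]}.Finite}


/-!
Write `A = cl P`, a countable closed set. The identity of `A` is an isomorphism between countable
closed sets, and by homogeneity it extends by any pair `a ↦ b` of points outside `A`, and then, by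
a countable back-and-forth, to an isomorphism `cl (A ∪ {a}) → cl (A ∪ {b})` of countable closed
sets. If `H` is uncountable, there is always a point outside a countable closed set, so the
isomorphisms between such sets again have the back-and-forth property; hence (Karp) each of them
preserves all `L_{ω₁,ω}`-formulas. Thus all points outside `A` satisfy the same formulas with
parameters in `P`, and either `φ(H)` or its complement is contained in `A`.
-/

section PartialMap

variable {M N : Type*}

theorem pdom_preimage_swap (p : Set (M × N)) : pdom (Prod.swap ⁻¹' p) = pimg p := by
  ext x; simp [pdom, pimg]

theorem pimg_preimage_swap (p : Set (M × N)) : pimg (Prod.swap ⁻¹' p) = pdom p := by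
  ext x; simp [pdom, pimg]

theorem pdom_insert (x : M) (y : N) (p : Set (M × N)) :
    pdom (insert (x, y) p) = insert x (pdom p) :=
  image_insert_eq

theorem pdom_mono {p q : Set (M × N)} (h : p ⊆ q) : pdom p ⊆ pdom q :=
  image_mono h

end PartialMap

theorem isQF_restrictFreeVar {α β : Type*} [DecidableEq α] {n : ℕ} {φ : L.BoundedFormula α n}
    (hφ : φ.IsQF) (f : φ.freeVarFinset → β) : (φ.restrictFreeVar f).IsQF := by
  induction hφ with
  | falsum => exact .falsum
  | of_isAtomic hφ =>
    cases hφ with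
    | equal => exact (BoundedFormula.IsAtomic.equal _ _).isQF
    | rel => exact (BoundedFormula.IsAtomic.rel _ _).isQF
  | imp _ _ ih₁ ih₂ => exact (ih₁ _).imp (ih₂ _)

namespace IsPartialEmbedding

variable {M N : Type u} [L.Structure M] [L.Structure N] {p q : Set (M × N)}

theorem realize_iff (hp : IsPartialEmbedding (L := L) p) {β : Type*} {φ : L.Formula β}
    (hφ : BoundedFormula.IsQF φ) {v : β → M} {v' : β → N} (hv : ∀ i, (v i, v' i) ∈ p) :
    φ.Realize v ↔ φ.Realize v' := by
  classical
  let e := φ.freeVarFinset.equivFin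
  have hp_restrict := hp _ (φ.restrictFreeVar e) (isQF_restrictFreeVar hφ e)
    (fun i => v (e.symm i)) (fun i => v' (e.symm i)) (fun i => hv _)
  have restrict_iff {K : Type u} [L.Structure K] (w : β → K) :
      (φ.restrictFreeVar e).Realize (fun i => w (e.symm i)) default ↔ φ.Realize w :=
    BoundedFormula.realize_restrictFreeVar w fun i => by rw [e.symm_apply_apply]
  exact (restrict_iff v).symm.trans (hp_restrict.trans (restrict_iff v'))

theorem snd_unique (hp : IsPartialEmbedding (L := L) p) {x : M} {y y' : N} (hy : (x, y) ∈ p)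
    (hy' : (x, y') ∈ p) : y = y' := by
  have h := hp.realize_iff (φ := (Term.var true).equal (Term.var false))
    (BoundedFormula.IsAtomic.equal _ _).isQF (v := fun _ => x)
    (v' := fun i : Bool => if i then y else y') (by simp [hy, hy'])
  simpa [Formula.realize_equal] using h

theorem mono (hp : IsPartialEmbedding (L := L) p) (h : q ⊆ p) : IsPartialEmbedding (L := L) q :=
  fun n φ hφ a b hab => hp n φ hφ a b fun i => h (hab i)

theorem swap (hp : IsPartialEmbedding (L := L) p) :
    IsPartialEmbedding (L := L) (Prod.swap ⁻¹' p) :=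
  fun n φ hφ a b hab => (hp n φ hφ b a hab).symm

theorem graphOn_id (A : Set M) : IsPartialEmbedding (L := L) (A.graphOn id) := by
  intro n φ _ a b hab
  have : a = b := funext fun i => (mem_graphOn.1 (hab i)).2
  rw [this]

theorem sUnion {S : Set (Set (M × N))} (hS : S.Nonempty) (hdir : DirectedOn (· ⊆ ·) S)
    (h : ∀ p ∈ S, IsPartialEmbedding (L := L) p) : IsPartialEmbedding (L := L) (⋃₀ S) := by
  intro n φ hφ a b hab
  have hfin : (range fun i => (a i, b i)).Finite := finite_range _
  obtain ⟨p, hpS, hp⟩ := hdir.exists_mem_subset_of_finite_of_subset_sUnion hS hfin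
    (range_subset_iff.2 hab)
  exact h p hpS n φ hφ a b fun i => hp (mem_range_self i)

theorem pimage_pdom (hp : IsPartialEmbedding (L := L) p) (h : q ⊆ p) :
    pimage p (pdom q) = pimg q := by
  ext y
  constructor
  · rintro ⟨_, ⟨⟨x, y'⟩, hq, rfl⟩, hy⟩
    exact ⟨(x, y'), hq, hp.snd_unique (h hq) hy⟩
  · rintro ⟨⟨x, y⟩, hq, rfl⟩
    exact ⟨x, ⟨_, hq, rfl⟩, h hq⟩

end IsPartialEmbedding

section BackAndForth

variable {M N : Type u} [L.Structure M] [L.Structure N] {𝓕 : Set (Set (M × N))}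
  {A : Set M} {B : Set N}

variable (L) in
/-- A back-and-forth system relative to `A` and `B`: a family of partial embeddings in which every
member can be extended so as to contain a prescribed point of `A` in its domain, or a prescribed
point of `B` in its image. The usual notion is the case `A = univ`, `B = univ`; for countable `A`
and `B` the system yields a partial embedding defined on all of `A` with image containing `B`. -/
structure IsBackAndForth (𝓕 : Set (Set (M × N))) (A : Set M) (B : Set N) : Prop where
  isPartialEmbedding : ∀ p ∈ 𝓕, IsPartialEmbedding (L := L) p
  forth : ∀ p ∈ 𝓕, ∀ x ∈ A, ∃ q ∈ 𝓕, p ⊆ q ∧ x ∈ pdom q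
  back : ∀ p ∈ 𝓕, ∀ y ∈ B, ∃ q ∈ 𝓕, p ⊆ q ∧ y ∈ pimg q

theorem IsBackAndForth.exists_isPartialEmbedding (h𝓕 : IsBackAndForth L 𝓕 A B)
    (hA : A.Countable) (hB : B.Countable) {r : Set (M × N)} (hr : r ∈ 𝓕) :
    ∃ q ⊆ ⋃₀ 𝓕, IsPartialEmbedding (L := L) q ∧ r ⊆ q ∧ A ⊆ pdom q ∧ B ⊆ pimg q := by
  have := hA.to_subtype
  have := hB.to_subtype
  have := Encodable.ofCountable (A ⊕ B)
  let 𝒟 : A ⊕ B → Order.Cofinal 𝓕 := Sum.elim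
    (fun x => ⟨{p | x.1 ∈ pdom p.1}, fun p => by
      obtain ⟨q, hq, hpq, hx⟩ := h𝓕.forth p p.2 x x.2
      exact ⟨⟨q, hq⟩, hx, hpq⟩⟩)
    (fun y => ⟨{p | y.1 ∈ pimg p.1}, fun p => by
      obtain ⟨q, hq, hpq, hy⟩ := h𝓕.back p p.2 y y.2
      exact ⟨⟨q, hq⟩, hy, hpq⟩⟩)
  let I := Order.idealOfCofinals ⟨r, hr⟩ 𝒟
  have hrI : ⟨r, hr⟩ ∈ I := Order.mem_idealOfCofinals _ 𝒟
  have subset_sUnion {p : 𝓕} (hp : p ∈ I) : p.1 ⊆ ⋃₀ (Subtype.val '' (I : Set 𝓕)) :=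
    subset_sUnion_of_mem (mem_image_of_mem _ hp)
  refine ⟨⋃₀ (Subtype.val '' (I : Set 𝓕)), sUnion_subset_sUnion (Subtype.coe_image_subset _ _),
    .sUnion (I.nonempty.image _) (directedOn_image.2 I.directed) ?_, subset_sUnion hrI,
    fun x hx => ?_, fun y hy => ?_⟩
  · rintro _ ⟨p, -, rfl⟩
    exact h𝓕.isPartialEmbedding p p.2
  · obtain ⟨p, hxp, hpI⟩ := Order.cofinal_meets_idealOfCofinals ⟨r, hr⟩ 𝒟 (.inl ⟨x, hx⟩)
    exact image_mono (subset_sUnion hpI) hxp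
  · obtain ⟨p, hyp, hpI⟩ := Order.cofinal_meets_idealOfCofinals ⟨r, hr⟩ 𝒟 (.inr ⟨y, hy⟩)
    exact image_mono (subset_sUnion hpI) hyp

theorem IsBackAndForth.realize_iff (h𝓕 : IsBackAndForth L 𝓕 univ univ) {α : Type*} {n : ℕ}
    (φ : InfFormula L α n) {p : Set (M × N)} (hp : p ∈ 𝓕) {v : α → M} {v' : α → N}
    {xs : Fin n → M} {xs' : Fin n → N} (hv : ∀ i, (v i, v' i) ∈ p)
    (hxs : ∀ i, (xs i, xs' i) ∈ p) : φ.Realize v xs ↔ φ.Realize v' xs' := by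
  have realize_iff_of_isQF {p : Set (M × N)} (hp : p ∈ 𝓕) {n : ℕ} {xs : Fin n → M}
      {xs' : Fin n → N} (hv : ∀ i, (v i, v' i) ∈ p) (hxs : ∀ i, (xs i, xs' i) ∈ p)
      {ψ : L.Formula (α ⊕ Fin n)} (hψ : BoundedFormula.IsQF ψ) :
      ψ.Realize (Sum.elim v xs) ↔ ψ.Realize (Sum.elim v' xs') :=
    (h𝓕.isPartialEmbedding p hp).realize_iff hψ (by rintro (i | i) <;> simp [hv, hxs])
  induction φ generalizing p with
  | falsum => exact Iff.rfl
  | equal t₁ t₂ =>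
    simpa only [Formula.realize_equal, InfFormula.Realize] using
      realize_iff_of_isQF hp hv hxs (ψ := t₁.equal t₂) (BoundedFormula.IsAtomic.equal _ _).isQF
  | rel R ts =>
    simpa only [Formula.realize_rel, InfFormula.Realize] using
      realize_iff_of_isQF hp hv hxs (ψ := R.formula ts) (BoundedFormula.IsAtomic.rel _ _).isQF
  | not φ ih => exact not_congr (ih hp hv hxs)
  | iInf φ ih => exact forall_congr' fun i => ih i hp hv hxs
  | all φ ih =>
    have realize_snoc_iff {q : Set (M × N)} (hq : q ∈ 𝓕) (hpq : p ⊆ q) {x : M} {x' : N}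
        (hx : (x, x') ∈ q) : φ.Realize v (Fin.snoc xs x) ↔ φ.Realize v' (Fin.snoc xs' x') :=
      ih hq (fun i => hpq (hv i)) (Fin.lastCases (by simpa using hx)
        fun i => by simpa using hpq (hxs i))
    constructor
    · intro h x'
      obtain ⟨q, hq, hpq, ⟨x, _⟩, hx, rfl⟩ := h𝓕.back p hp x' (mem_univ x')
      exact (realize_snoc_iff hq hpq hx).1 (h x)
    · intro h x
      obtain ⟨q, hq, hpq, ⟨_, x'⟩, hx, rfl⟩ := h𝓕.forth p hp x (mem_univ x)
      exact (realize_snoc_iff hq hpq hx).2 (h x')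

end BackAndForth

theorem IsPregeometry.countable_cl {α : Type*} {cl : Set α → Set α} (hcl : IsPregeometry cl)
    (hfin : ∀ X : Set α, X.Finite → (cl X).Countable) {X : Set α} (hX : X.Countable) :
    (cl X).Countable := by
  have hsub : cl X ⊆ ⋃ F ∈ {F : Set α | F.Finite ∧ F ⊆ X}, cl F := fun y hy => by
    obtain ⟨F, hFX, hyF⟩ := hcl.finChar X y hy
    exact mem_biUnion ⟨F.finite_toSet, hFX⟩ hyF
  exact .mono hsub (.biUnion (countable_ofPred_finite_subset hX) fun F hF => hfin F hF.1)

section QMClass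

variable {C : Set (QMObj.{u} L)} {H H' : QMObj.{u} L} {g r p : Set (H.carrier × H'.carrier)}

theorem IsQMClass.countable_cl (hC : IsQMClass C) (hH : H ∈ C) {X : Set H.carrier}
    (hX : X.Countable) : (H.cl X).Countable :=
  (hC.pregeom H hH).countable_cl (hC.cl_finite_countable H hH) hX

theorem IsQMClass.mem_cl_pdom_iff (hC : IsQMClass C) (hH : H ∈ C) (hH' : H' ∈ C)
    (hp : IsPartialEmbedding (L := L) p) (hrp : r ⊆ p) {y : H.carrier} {y' : H'.carrier}
    (hy : (y, y') ∈ p) : y ∈ H.cl (pdom r) ↔ y' ∈ H'.cl (pimg r) := by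
  rw [hC.cl_embedding H hH H' hH' p hp (pdom r) (pdom_mono hrp) y y' hy, hp.pimage_pdom hrp]

variable (H H') in
/-- The graph of an isomorphism between countable closed subsets of `H` and `H'`. -/
structure IsClosedIso (g : Set (H.carrier × H'.carrier)) : Prop where
  isPartialEmbedding : IsPartialEmbedding (L := L) g
  countable_pdom : (pdom g).Countable
  cl_pdom : H.cl (pdom g) = pdom g
  countable_pimg : (pimg g).Countable
  cl_pimg : H'.cl (pimg g) = pimg g

namespace IsClosedIso

theorem swap (hg : IsClosedIso H H' g) : IsClosedIso H' H (Prod.swap ⁻¹' g) where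
  isPartialEmbedding := hg.isPartialEmbedding.swap
  countable_pdom := by rw [pdom_preimage_swap]; exact hg.countable_pimg
  cl_pdom := by rw [pdom_preimage_swap, hg.cl_pimg]
  countable_pimg := by rw [pimg_preimage_swap]; exact hg.countable_pdom
  cl_pimg := by rw [pimg_preimage_swap, hg.cl_pdom]

theorem ccoe_pdom (hg : IsClosedIso H H' g) : CCOE H (pdom g) :=
  .inl ⟨hg.countable_pdom, hg.cl_pdom⟩

theorem ccoe_pimg (hg : IsClosedIso H H' g) : CCOE H' (pimg g) :=
  .inl ⟨hg.countable_pimg, hg.cl_pimg⟩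

theorem graphOn_id {A : Set H.carrier} (hA : A.Countable) (hcl : H.cl A = A) :
    IsClosedIso H H (A.graphOn id) := by
  have hdom : pdom (A.graphOn id) = A := image_fst_graphOn _ _
  have himg : pimg (A.graphOn id) = A := (image_snd_graphOn _).trans (image_id A)
  exact ⟨.graphOn_id A, by rwa [hdom], by rwa [hdom], by rwa [himg], by rwa [himg]⟩

theorem exists_isPartialEmbedding_insert (hg : IsClosedIso H H' g) (hC : IsQMClass C)
    (hH : H ∈ C) (hH' : H' ∈ C) (hgp : g ⊆ p) (hfin : (p \ g).Finite)
    (hp : IsPartialEmbedding (L := L) p) {y : H.carrier} (hy : y ∈ H.cl (pdom p)) :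
    ∃ y', IsPartialEmbedding (L := L) (insert (y, y') p) := by
  have hunion : g ∪ p \ g = p := union_sdiff_cancel hgp
  have hdom : pdom (p \ g) ∪ pdom g = pdom p := by
    rw [union_comm, pdom, pdom, ← image_union, hunion, pdom]
  simpa only [hunion, union_singleton] using
    hC.homogeneity₂ H hH H' hH' g (p \ g) hg.ccoe_pdom hg.ccoe_pimg hg.isPartialEmbedding
      (hfin.image _) (by rwa [hunion]) y (by rwa [hdom])

end IsClosedIso

variable (H H') in
/-- The stages of the back-and-forth construction extending `r ⊇ g` to the closure of its domain:
the partial embeddings `p ⊇ r` that add finitely many pairs to `g` and whose domain lies in the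
closure of that of `r`. Their images then lie in the closure of the image of `r`. -/
structure IsFiniteExtension (g r p : Set (H.carrier × H'.carrier)) : Prop where
  isPartialEmbedding : IsPartialEmbedding (L := L) p
  subset : r ⊆ p
  finite_diff : (p \ g).Finite
  pdom_subset_cl : pdom p ⊆ H.cl (pdom r)

namespace IsFiniteExtension

theorem pimg_subset_cl (hp : IsFiniteExtension H H' g r p) (hC : IsQMClass C) (hH : H ∈ C)
    (hH' : H' ∈ C) : pimg p ⊆ H'.cl (pimg r) := by
  rintro _ ⟨⟨x, x'⟩, hx, rfl⟩
  exact (hC.mem_cl_pdom_iff hH hH' hp.isPartialEmbedding hp.subset hx).1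
    (hp.pdom_subset_cl ⟨_, hx, rfl⟩)

theorem swap (hp : IsFiniteExtension H H' g r p) (hC : IsQMClass C) (hH : H ∈ C)
    (hH' : H' ∈ C) :
    IsFiniteExtension H' H (Prod.swap ⁻¹' g) (Prod.swap ⁻¹' r) (Prod.swap ⁻¹' p) where
  isPartialEmbedding := hp.isPartialEmbedding.swap
  subset := preimage_mono hp.subset
  finite_diff := by
    rw [← preimage_sdiff]
    exact hp.finite_diff.preimage Prod.swap_injective.injOn
  pdom_subset_cl := by
    simpa only [pdom_preimage_swap] using hp.pimg_subset_cl hC hH hH'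

theorem forth (hp : IsFiniteExtension H H' g r p) (hC : IsQMClass C) (hH : H ∈ C) (hH' : H' ∈ C)
    (hg : IsClosedIso H H' g) (hgr : g ⊆ r) {y : H.carrier} (hy : y ∈ H.cl (pdom r)) :
    ∃ q, IsFiniteExtension H H' g r q ∧ p ⊆ q ∧ y ∈ pdom q := by
  obtain ⟨y', hq⟩ := hg.exists_isPartialEmbedding_insert hC hH hH' (hgr.trans hp.subset)
    hp.finite_diff hp.isPartialEmbedding ((hC.pregeom H hH).mono (pdom_mono hp.subset) hy)
  refine ⟨insert (y, y') p, ⟨hq, hp.subset.trans (subset_insert _ _), ?_, ?_⟩,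
    subset_insert _ _, (y, y'), mem_insert _ _, rfl⟩
  · exact (hp.finite_diff.insert (y, y')).subset insert_sdiff_subset
  · rw [pdom_insert]
    exact insert_subset hy hp.pdom_subset_cl

theorem isBackAndForth (hC : IsQMClass C) (hH : H ∈ C) (hH' : H' ∈ C) (hg : IsClosedIso H H' g)
    (hgr : g ⊆ r) :
    IsBackAndForth L {p | IsFiniteExtension H H' g r p} (H.cl (pdom r)) (H'.cl (pimg r)) where
  isPartialEmbedding _ hp := hp.isPartialEmbedding
  forth _ hp _ hy := hp.forth hC hH hH' hg hgr hy
  back _ hp y hy := by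
    obtain ⟨q, hq, hpq, hyq⟩ := (hp.swap hC hH hH').forth hC hH' hH hg.swap (preimage_mono hgr)
      (y := y) (by rwa [pdom_preimage_swap])
    exact ⟨Prod.swap ⁻¹' q, hq.swap hC hH' hH, preimage_mono (f := Prod.swap) hpq,
      by rwa [pimg_preimage_swap]⟩

end IsFiniteExtension

namespace IsClosedIso

theorem exists_isClosedIso_of_finite_diff (hg : IsClosedIso H H' g) (hC : IsQMClass C)
    (hH : H ∈ C) (hH' : H' ∈ C) (hgr : g ⊆ r) (hfin : (r \ g).Finite)
    (hr : IsPartialEmbedding (L := L) r) : ∃ q, IsClosedIso H H' q ∧ r ⊆ q := by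
  have hdiff : r ⊆ g ∪ r \ g := (union_sdiff_cancel hgr).ge
  have hcd : (H.cl (pdom r)).Countable := hC.countable_cl hH <|
    ((hg.countable_pdom.union (hfin.image Prod.fst).countable).mono
      ((pdom_mono hdiff).trans (image_union ..).le))
  have hci : (H'.cl (pimg r)).Countable := hC.countable_cl hH' <|
    ((hg.countable_pimg.union (hfin.image Prod.snd).countable).mono
      ((image_mono hdiff).trans (image_union ..).le))
  obtain ⟨q, hq_stages, hq, hrq, hsub_dom, hsub_img⟩ :=
    (IsFiniteExtension.isBackAndForth hC hH hH' hg hgr).exists_isPartialEmbedding hcd hci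
      ⟨hr, subset_rfl, hfin, (hC.pregeom H hH).subset_cl _⟩
  have hdom : pdom q = H.cl (pdom r) := by
    refine hsub_dom.antisymm' ?_
    rintro _ ⟨z, hz, rfl⟩
    obtain ⟨p, hp, hzp⟩ := hq_stages hz
    exact hp.pdom_subset_cl ⟨z, hzp, rfl⟩
  have himg : pimg q = H'.cl (pimg r) := by
    refine hsub_img.antisymm' ?_
    rintro _ ⟨z, hz, rfl⟩
    obtain ⟨p, hp, hzp⟩ := hq_stages hz
    exact hp.pimg_subset_cl hC hH hH' ⟨z, hzp, rfl⟩
  exact ⟨q, ⟨hq, hdom ▸ hcd, by rw [hdom, (hC.pregeom H hH).idem],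
    himg ▸ hci, by rw [himg, (hC.pregeom H' hH').idem]⟩, hrq⟩

theorem exists_isClosedIso_insert (hg : IsClosedIso H H' g) (hC : IsQMClass C) (hH : H ∈ C)
    (hH' : H' ∈ C) {x : H.carrier} {x' : H'.carrier} (hx : x ∉ pdom g) (hx' : x' ∉ pimg g) :
    ∃ q, IsClosedIso H H' q ∧ insert (x, x') g ⊆ q := by
  have hins := hC.homogeneity₁ H hH H' hH' g hg.ccoe_pdom hg.ccoe_pimg hg.isPartialEmbedding
    x x' (by rwa [hg.cl_pdom]) (by rwa [hg.cl_pimg])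
  rw [union_singleton] at hins
  exact hg.exists_isClosedIso_of_finite_diff hC hH hH' (subset_insert _ _)
    ((finite_singleton (x, x')).subset (sdiff_subset_iff.2 union_singleton.ge)) hins

theorem forth (hg : IsClosedIso H H' g) (hC : IsQMClass C) (hH : H ∈ C) (hH' : H' ∈ C)
    [Uncountable H'.carrier] (x : H.carrier) :
    ∃ q, IsClosedIso H H' q ∧ g ⊆ q ∧ x ∈ pdom q := by
  by_cases hx : x ∈ pdom g
  · exact ⟨g, hg, subset_rfl, hx⟩
  · obtain ⟨x', hx'⟩ : ∃ x', x' ∉ pimg g :=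
      (ne_univ_iff_exists_notMem _).1 fun h => not_countable_univ (h ▸ hg.countable_pimg)
    obtain ⟨q, hq, hgq⟩ := hg.exists_isClosedIso_insert hC hH hH' hx hx'
    exact ⟨q, hq, (subset_insert _ _).trans hgq, _, hgq (mem_insert _ _), rfl⟩

theorem isBackAndForth (hC : IsQMClass C) (hH : H ∈ C) (hH' : H' ∈ C)
    [Uncountable H.carrier] [Uncountable H'.carrier] :
    IsBackAndForth L {g | IsClosedIso H H' g} univ univ where
  isPartialEmbedding _ hg := hg.isPartialEmbedding
  forth _ hg x _ := hg.forth hC hH hH' x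
  back _ hg x' _ := by
    obtain ⟨q, hq, hgq, hx'⟩ := hg.swap.forth hC hH' hH x'
    exact ⟨Prod.swap ⁻¹' q, hq.swap, preimage_mono (f := Prod.swap) hgq,
      by rwa [pimg_preimage_swap]⟩

end IsClosedIso

theorem IsQMClass.realizeP_iff_of_notMem_cl (hC : IsQMClass C) (hH : H ∈ C)
    [Uncountable H.carrier] {P : Set H.carrier} (hP : P.Countable)
    (φ : InfFormula L (↥P ⊕ Fin 1) 0) {a b : H.carrier} (ha : a ∉ H.cl P) (hb : b ∉ H.cl P) :
    φ.RealizeP (fun _ => a) ↔ φ.RealizeP (fun _ => b) := by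
  have hid : IsClosedIso H H ((H.cl P).graphOn id) :=
    .graphOn_id (hC.countable_cl hH hP) ((hC.pregeom H hH).idem P)
  obtain ⟨q, hq, hsub⟩ := hid.exists_isClosedIso_insert hC hH hH (x := a) (x' := b)
    (by rwa [pdom, image_fst_graphOn]) (by rwa [pimg, image_snd_graphOn, image_id])
  refine (IsClosedIso.isBackAndForth hC hH hH).realize_iff φ hq ?_ fun i => i.elim0
  rintro (c | -)
  · exact hsub (.inr (mem_graphOn.2 ⟨(hC.pregeom H hH).subset_cl P c.2, rfl⟩))
  · exact hsub (.inl rfl)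

end QMClass

/-- For `H ∈ C` and an `L_{ω₁,ω}`-formula `φ(v)` in one free variable,
possibly using countably many parameters from `H`, the set `φ(H)` is countable or
cocountable. -/
theorem statement_5 {L : FirstOrder.Language.{v, w}} (C : Set (QMObj.{u} L))
    (hC : IsQMClass C) (H : QMObj.{u} L) (hH : H ∈ C)
    (P : Set H.carrier) (hP : P.Countable)
    (φ : InfFormula L (↥P ⊕ Fin 1) 0) :
    {a : H.carrier | φ.RealizeP (fun _ => a)}.Countable ∨
      {a : H.carrier | ¬ φ.RealizeP (fun _ => a)}.Countable := by
  by_cases hcount : Countable H.carrier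
  · exact .inl (to_countable _)
  have : Uncountable H.carrier := not_countable_iff.1 hcount
  have hcl : (H.cl P).Countable := hC.countable_cl hH hP
  by_cases h : ∃ a ∉ H.cl P, φ.RealizeP (fun _ => a)
  · obtain ⟨a, haP, ha⟩ := h
    refine .inr (hcl.mono fun b hb => by_contra fun hbP => hb ?_)
    exact (hC.realizeP_iff_of_notMem_cl hH hP φ haP hbP).1 ha
  · exact .inl (hcl.mono fun b hb => by_contra fun hbP => h ⟨b, hbP, hb⟩)

end QM
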